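/- The real Gamma function satisfies Γ(5/12) = (√π · 2^(1/4) · √(√3 − 1) / 3^(1/8)) · Γ(1/4) · Γ(1/3)⁻¹. -/

import Mathlib

open Real

theorem aux_convex (c : ℝ) (hc : 0 ≤ c) :
    ConvexOn ℝ (Set.Ioi (0:ℝ)) (fun s => Real.log (Real.Gamma (s / 3 + c))) := by
  refine ⟨convex_Ioi _, ?_⟩
  intro x hx y hy a b ha hb hab
  have hx' : (0:ℝ) < x := hx
  have hy' : (0:ℝ) < y := hy
  have h := Real.convexOn_log_Gamma.2 (x := x / 3 + c) (y := y / 3 + c)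
    (show (0:ℝ) < _ by positivity) (show (0:ℝ) < _ by positivity) ha hb hab
  have e : (a • x + b • y) / 3 + c = a • (x / 3 + c) + b • (y / 3 + c) := by
    simp only [smul_eq_mul]
    linear_combination (-c) * hab
  simp only [Function.comp_apply] at h
  simp only
  rw [e]
  exact h

theorem aux_reflect_third :
    Real.Gamma (1/3) * Real.Gamma (2/3) = 2 * π / √3 := by
  have h := Real.Gamma_mul_Gamma_one_sub (1/3)
  rw [show π * (1/3) = π / 3 by ring, Real.sin_pi_div_three,
    show (1:ℝ) - 1/3 = 2/3 by norm_num] at h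
  rw [h]; field_simp

theorem aux_triple {s : ℝ} (hs : 0 < s) :
    Real.Gamma (s/3 + 0) * Real.Gamma (s/3 + 1/3) * Real.Gamma (s/3 + 2/3) * (3:ℝ) ^ (s - 1)
      * (√3 / (2 * π)) = Real.Gamma s := by
  have key := Real.eq_Gamma_of_log_convex (f := fun s => Real.Gamma (s/3 + 0) *
    Real.Gamma (s/3 + 1/3) * Real.Gamma (s/3 + 2/3) * (3:ℝ) ^ (s - 1) * (√3 / (2 * π)))
    ?_ ?_ ?_ ?_
  · exact key hs
  · have hl : ConvexOn ℝ (Set.Ioi (0:ℝ)) (fun s : ℝ => Real.log 3 * s) :=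
      (convexOn_id (convex_Ioi (0 : ℝ))).smul (Real.log_nonneg (by norm_num))
    refine (((((aux_convex 0 le_rfl).add (aux_convex (1/3) (by norm_num))).add
      (aux_convex (2/3) (by norm_num))).add hl).add_const
        (Real.log (√3 / (2 * π)) - Real.log 3)).congr ?_
    intro x hx
    have hx' : (0:ℝ) < x := hx
    have h1 : Real.Gamma (x/3 + 0) ≠ 0 := (Real.Gamma_pos_of_pos (by positivity)).ne'
    have h2 : Real.Gamma (x/3 + 1/3) ≠ 0 := (Real.Gamma_pos_of_pos (by positivity)).ne'
    have h3 : Real.Gamma (x/3 + 2/3) ≠ 0 := (Real.Gamma_pos_of_pos (by positivity)).ne'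
    have h4 : (3:ℝ) ^ (x - 1) ≠ 0 := by positivity
    have h5 : √3 / (2 * π) ≠ 0 := by positivity
    simp only [Function.comp_apply, Pi.add_apply]
    rw [Real.log_mul (by positivity) h5, Real.log_mul (by positivity) h4,
      Real.log_mul (by positivity) h3, Real.log_mul h1 h2, Real.log_rpow (by norm_num)]
    ring
  · intro y hy
    rw [show (y+1)/3 + 0 = y/3 + 1/3 by ring, show (y+1)/3 + 1/3 = y/3 + 2/3 by ring,
      show (y+1)/3 + 2/3 = y/3 + 1 by ring, Real.Gamma_add_one (by positivity),
      show y + 1 - 1 = (y - 1) + 1 by ring, Real.rpow_add_one (by norm_num), add_zero]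
    ring
  · intro y hy
    have h1 := Real.Gamma_pos_of_pos (show 0 < y/3 + 0 by positivity)
    have h2 := Real.Gamma_pos_of_pos (show 0 < y/3 + 1/3 by positivity)
    have h3 := Real.Gamma_pos_of_pos (show 0 < y/3 + 2/3 by positivity)
    positivity
  · rw [add_zero, show (1:ℝ)/3 + 1/3 = 2/3 by norm_num, show (1:ℝ)/3 + 2/3 = 1 by norm_num,
      aux_reflect_third, Real.Gamma_one, sub_self, Real.rpow_zero]
    field_simp

theorem aux_sin : Real.sin (π * (5/12)) = √2 * (√3 + 1) / 4 := by
  rw [show π * (5/12) = π / 4 + π / 6 by ring, Real.sin_add, Real.sin_pi_div_four,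
    Real.cos_pi_div_four, Real.sin_pi_div_six, Real.cos_pi_div_six]
  ring

theorem gamma_five_twelfths :
    Real.Gamma (5/12) =
      (Real.sqrt π * (2:ℝ) ^ ((1:ℝ)/4) * Real.sqrt (Real.sqrt 3 - 1) / (3:ℝ) ^ ((1:ℝ)/8)) *
        Real.Gamma (1/4) * (Real.Gamma (1/3))⁻¹ := by
  have E1 := aux_triple (s := 1/4) (by norm_num)
  have E2 := Real.Gamma_mul_Gamma_add_half (1/12)
  have E3 := Real.Gamma_mul_Gamma_one_sub (5/12)
  have E4 := Real.Gamma_mul_Gamma_add_half (1/6)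
  have E5 := aux_reflect_third
  have E6 := Real.Gamma_mul_Gamma_one_sub (1/4)
  rw [aux_sin] at E3
  rw [show π * (1/4) = π / 4 by ring, Real.sin_pi_div_four] at E6
  norm_num at E1 E2 E3 E4 E5 E6
  have pg : 0 < Real.Gamma (5/12) := Real.Gamma_pos_of_pos (by norm_num)
  have pa : 0 < Real.Gamma (1/12) := Real.Gamma_pos_of_pos (by norm_num)
  have pb : 0 < Real.Gamma (7/12) := Real.Gamma_pos_of_pos (by norm_num)
  have pq : 0 < Real.Gamma (1/4) := Real.Gamma_pos_of_pos (by norm_num)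
  have pr : 0 < Real.Gamma (3/4) := Real.Gamma_pos_of_pos (by norm_num)
  have pt : 0 < Real.Gamma (1/3) := Real.Gamma_pos_of_pos (by norm_num)
  have pu : 0 < Real.Gamma (2/3) := Real.Gamma_pos_of_pos (by norm_num)
  have pv : 0 < Real.Gamma (1/6) := Real.Gamma_pos_of_pos (by norm_num)
  have s3 : √3 ^ 2 = 3 := Real.sq_sqrt (by norm_num)
  have s2 : √2 ^ 2 = 2 := Real.sq_sqrt (by norm_num)
  have sp : √π ^ 2 = π := Real.sq_sqrt pi_pos.le
  have h31 : 1 < √3 := by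
    rw [Real.lt_sqrt (by norm_num)]; norm_num
  have x2 : ((3:ℝ) ^ ((1:ℝ)/4)) ^ 2 = √3 := by
    rw [← Real.rpow_natCast, ← Real.rpow_mul (by norm_num), Real.sqrt_eq_rpow]; norm_num
  have z2 : ((3:ℝ) ^ ((1:ℝ)/8)) ^ 2 = (3:ℝ) ^ ((1:ℝ)/4) := by
    rw [← Real.rpow_natCast, ← Real.rpow_mul (by norm_num)]; norm_num
  have w2 : ((2:ℝ) ^ ((1:ℝ)/4)) ^ 2 = √2 := by
    rw [← Real.rpow_natCast, ← Real.rpow_mul (by norm_num), Real.sqrt_eq_rpow]; norm_num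
  have x3 : (3:ℝ) ^ (-((3:ℝ)/4)) = (3:ℝ) ^ ((1:ℝ)/4) / 3 := by
    rw [show -((3:ℝ)/4) = 1/4 - 1 by norm_num, Real.rpow_sub_one (by norm_num)]
  have c2 : (2:ℝ) ^ ((5:ℝ)/6) * (2:ℝ) ^ ((2:ℝ)/3) = 2 * √2 := by
    rw [← Real.rpow_add (by norm_num), show (5:ℝ)/6 + 2/3 = 1/2 + 1 by norm_num,
      Real.rpow_add_one (by norm_num), Real.sqrt_eq_rpow]; ring
  rw [x3] at E1
  have px : 0 < (3:ℝ) ^ ((1:ℝ)/4) := by positivity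
  have pz : 0 < (3:ℝ) ^ ((1:ℝ)/8) := by positivity
  have pw : 0 < (2:ℝ) ^ ((1:ℝ)/4) := by positivity
  have p2 : 0 < √2 := by positivity
  have p3 : 0 < √3 := by positivity
  have pp : 0 < √π := by positivity
  have ppi := pi_pos
  have sm : √(√3 - 1) ^ 2 = √3 - 1 := Real.sq_sqrt (by linarith)
  generalize Real.Gamma (5/12) = g at *
  generalize Real.Gamma (1/12) = a at *
  generalize Real.Gamma (7/12) = b at *
  generalize Real.Gamma (1/4) = q at *
  generalize Real.Gamma (3/4) = r at *
  generalize Real.Gamma (1/3) = t at *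
  generalize Real.Gamma (2/3) = u at *
  generalize Real.Gamma (1/6) = v at *
  generalize (3:ℝ) ^ ((1:ℝ)/4) = x at *
  generalize (3:ℝ) ^ ((1:ℝ)/8) = z at *
  generalize (2:ℝ) ^ ((1:ℝ)/4) = w at *
  generalize (2:ℝ) ^ ((5:ℝ)/6) = c at *
  generalize (2:ℝ) ^ ((2:ℝ)/3) = d at *
  have E5' : t * u * √3 = 2 * π := by rw [E5]; field_simp
  have E6' : q * r = √2 * π := by
    rw [E6]; field_simp; linear_combination -s2
  have GB : g * b = π * √2 * (√3 - 1) := by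
    rw [E3]; field_simp; linear_combination (1 - √3 ^ 2) * s2 - 2 * s3
  have AB : a * b = √2 * √3 * t ^ 2 := by
    have : (a * b) * (t * u) = 2 * √2 * π * t ^ 2 := by
      rw [E2]
      linear_combination (c * √π * t) * E4 + t ^ 2 * √π ^ 2 * c2 + 2 * √2 * t ^ 2 * sp
    have h : (a * b - √2 * √3 * t ^ 2) * (2 * π) = 0 := by
      linear_combination √3 * this - a * b * E5'
    rcases mul_eq_zero.1 h with h | h
    · linarith
    · exact absurd h (by positivity)
  have AG : a * g = √2 * x * q ^ 2 := by
    have h0 : a * g * r * x * √3 = 6 * π * q := by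
      rw [← E1]; field_simp; ring
    have h : (a * g - √2 * x * q ^ 2) * (3 * √2 * π) = 0 := by
      linear_combination q * x * h0 - a * g * x ^ 2 * √3 * E6' - a * g * √2 * π * √3 * x2 - a * g * √2 * π * s3 - 3 * π * x * q ^ 2 * s2
    rcases mul_eq_zero.1 h with h | h
    · linarith
    · exact absurd h (by positivity)
  have G2 : g ^ 2 * (x * t ^ 2) = π * √2 * (√3 - 1) * q ^ 2 := by
    have h : (g ^ 2 * (x * t ^ 2) - π * √2 * (√3 - 1) * q ^ 2) * (√2 * x) = 0 := by
      linear_combination g * b * AG + √2 * x * q ^ 2 * GB - g ^ 2 * AB + g ^ 2 * t ^ 2 * √2 * x2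
    rcases mul_eq_zero.1 h with h | h
    · linarith
    · exact absurd h (by positivity)
  have fin : g * (z * t) = √π * w * √(√3 - 1) * q := by
    refine (sq_eq_sq₀ (by positivity) (by positivity)).1 ?_
    simp only [mul_pow, z2, sp, w2, sm]
    exact G2
  rw [div_mul_eq_mul_div, ← fin]
  field_simp
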